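/- Let (X,T) be a transitive topological dynamical system given by a continuous ℤ^d-action on a compact metric space and let f ∈ C(X). Then (X,T) is either f-almost mean equicontinuous or f-mean sensitive. -/

import Mathlib

open MeasureTheory Filter Finset Metric
open scoped Classical

noncomputable section

/-- The box `{0,…,n−1}^d` inside `ℤ^d`. -/
def Fbox (d n : ℕ) : Finset (Fin d → ℤ) :=
  Fintype.piFinset fun _ => Finset.Icc (0 : ℤ) ((n : ℤ) - 1)

/-- Upper density of a subset of `ℤ^d` along the boxes `F_n`. -/
def upperDensity (d : ℕ) (S : Set (Fin d → ℤ)) : ℝ :=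
  Filter.limsup
    (fun n : ℕ => (((Fbox d n).filter (fun j => j ∈ S)).card : ℝ) / ((Fbox d n).card : ℝ))
    Filter.atTop

/-- Lower density of a subset of `ℤ^d` along the boxes `F_n`. -/
def lowerDensity (d : ℕ) (S : Set (Fin d → ℤ)) : ℝ :=
  Filter.liminf
    (fun n : ℕ => (((Fbox d n).filter (fun j => j ∈ S)).card : ℝ) / ((Fbox d n).card : ℝ))
    Filter.atTop

variable {X : Type*}

/-- The pseudometric `ρ_f(x,y) = inf {ε > 0 : D̄({i : |f(T^i x) − f(T^i y)| > ε}) < ε}`. -/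
def rhoF {d : ℕ} (T : (Fin d → ℤ) → X → X) (f : X → ℂ) (x y : X) : ℝ :=
  sInf {ε : ℝ | 0 < ε ∧ upperDensity d {i | ε < ‖f (T i x) - f (T i y)‖} < ε}

/-!
The boxes `F_n` form a Følner sequence, so the upper density, and with it `ρ_f`, is invariant under
translation. If the system is not `f`-mean sensitive, then for each `ε` some nonempty open set `U`
has `ρ_f`-diameter at most `ε`; the orbit of a transitive point `x` enters `U`, say `T^j x ∈ U`, and
the invariance of `ρ_f` carries the bound over to the neighbourhood `(T^j)⁻¹ U` of `x`.
-/

open scoped Topology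

lemma card_filter_add_mem_le {G : Type*} [Add G] [IsRightCancelAdd G] [DecidableEq G]
    (F : Finset G) (S : Set G) (j : G) :
    #{i ∈ F | i + j ∈ S} ≤ #{i ∈ F | i ∈ S} + #{i ∈ F | i + j ∉ F} := by
  have card_inside_le : #{i ∈ F | i + j ∈ F ∧ i + j ∈ S} ≤ #{i ∈ F | i ∈ S} :=
    Finset.card_le_card_of_injOn (· + j) (fun i hi => by simp_all) (add_left_injective j).injOn
  have subset_union : {i ∈ F | i + j ∈ S} ⊆
      {i ∈ F | i + j ∈ F ∧ i + j ∈ S} ∪ {i ∈ F | i + j ∉ F} := by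
    intro i
    simp only [Finset.mem_union, Finset.mem_filter]
    tauto
  calc #{i ∈ F | i + j ∈ S}
    _ ≤ #{i ∈ F | i + j ∈ F ∧ i + j ∈ S} + #{i ∈ F | i + j ∉ F} :=
      (Finset.card_le_card subset_union).trans (Finset.card_union_le _ _)
    _ ≤ _ := by gcongr

lemma card_Fbox (d n : ℕ) : #(Fbox d n) = n ^ d := by
  simp [Fbox, Fintype.card_piFinset]

lemma card_Fbox_filter_add_mem (d n : ℕ) (j : Fin d → ℤ) :
    #{i ∈ Fbox d n | i + j ∈ Fbox d n} = ∏ k, (n - (j k).natAbs) := by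
  have inter_eq : {i ∈ Fbox d n | i + j ∈ Fbox d n} =
      Fintype.piFinset fun k => Finset.Icc (max 0 (-j k)) (min (n - 1) (n - 1 - j k)) := by
    ext i
    simp only [Fbox, Finset.mem_filter, Fintype.mem_piFinset, ← forall_and, Finset.mem_Icc,
      Pi.add_apply]
    exact forall_congr' fun k => by omega
  rw [inter_eq, Fintype.card_piFinset]
  refine Finset.prod_congr rfl fun k _ => ?_
  rw [Int.card_Icc]
  omega

/-- The proportion of points of the box `F_n` lying in `S`; its upper limit in `n` is
`upperDensity d S`. It is `0` when `F_n` is empty. -/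
def boxFrequency {d : ℕ} (S : Set (Fin d → ℤ)) (n : ℕ) : ℝ :=
  (#{i ∈ Fbox d n | i ∈ S} : ℝ) / #(Fbox d n)

section UpperDensity

variable {d : ℕ}

lemma boxFrequency_nonneg (S : Set (Fin d → ℤ)) (n : ℕ) : 0 ≤ boxFrequency S n := by
  unfold boxFrequency
  positivity

lemma boxFrequency_le_one (S : Set (Fin d → ℤ)) (n : ℕ) : boxFrequency S n ≤ 1 :=
  div_le_one_of_le₀ (mod_cast Finset.card_filter_le _ _) (by positivity)

lemma isBoundedUnder_le_boxFrequency (S : Set (Fin d → ℤ)) :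
    IsBoundedUnder (· ≤ ·) atTop (boxFrequency S) :=
  isBoundedUnder_of ⟨1, boxFrequency_le_one S⟩

lemma isBoundedUnder_ge_boxFrequency (S : Set (Fin d → ℤ)) :
    IsBoundedUnder (· ≥ ·) atTop (boxFrequency S) :=
  isBoundedUnder_of ⟨0, boxFrequency_nonneg S⟩

lemma tendsto_card_Fbox_filter_add_mem_div (j : Fin d → ℤ) :
    Tendsto (fun n => (#{i ∈ Fbox d n | i + j ∈ Fbox d n} : ℝ) / #(Fbox d n)) atTop (𝓝 1) := by
  have factor (k : Fin d) :
      Tendsto (fun n : ℕ => ((n - (j k).natAbs : ℕ) : ℝ) / n) atTop (𝓝 1) := by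
    have lim : Tendsto (fun n : ℕ => 1 - ((j k).natAbs : ℝ) / n) atTop (𝓝 1) := by
      simpa using (tendsto_const_div_atTop_nhds_zero_nat ((j k).natAbs : ℝ)).const_sub 1
    refine lim.congr' ?_
    filter_upwards [eventually_ge_atTop (j k).natAbs, eventually_gt_atTop 0] with n hjn hn
    rw [Nat.cast_sub hjn, sub_div, div_self (by positivity)]
  have prod_factor := tendsto_finsetProd Finset.univ fun k _ => factor k
  rw [Finset.prod_const_one] at prod_factor
  refine prod_factor.congr fun n => ?_
  rw [card_Fbox_filter_add_mem, card_Fbox, Finset.prod_div_distrib]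
  simp

lemma tendsto_card_Fbox_filter_add_notMem_div (j : Fin d → ℤ) :
    Tendsto (fun n => (#{i ∈ Fbox d n | i + j ∉ Fbox d n} : ℝ) / #(Fbox d n)) atTop (𝓝 0) := by
  have lim := (tendsto_card_Fbox_filter_add_mem_div j).const_sub 1
  rw [sub_self] at lim
  refine lim.congr' ?_
  filter_upwards [eventually_gt_atTop 0] with n hn
  have card_pos : (0 : ℝ) < #(Fbox d n) := by
    rw [card_Fbox]
    positivity
  have card_split : (#{i ∈ Fbox d n | i + j ∈ Fbox d n} : ℝ) +
      #{i ∈ Fbox d n | i + j ∉ Fbox d n} = #(Fbox d n) := by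
    rw [← Nat.cast_add, Finset.card_filter_add_card_filter_not]
  rw [← card_split] at card_pos ⊢
  field_simp
  ring

lemma upperDensity_preimage_add_le (j : Fin d → ℤ) (S : Set (Fin d → ℤ)) :
    upperDensity d {i | i + j ∈ S} ≤ upperDensity d S := by
  set boundary : ℕ → ℝ := fun n => (#{i ∈ Fbox d n | i + j ∉ Fbox d n} : ℝ) / #(Fbox d n)
  have lim : Tendsto boundary atTop (𝓝 0) := tendsto_card_Fbox_filter_add_notMem_div j
  have freq_le : boxFrequency {i | i + j ∈ S} ≤ boxFrequency S + boundary := fun n => by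
    simp only [boxFrequency, boundary, Pi.add_apply, ← add_div, Set.mem_ofPred_eq]
    gcongr
    exact_mod_cast card_filter_add_mem_le (Fbox d n) S j
  calc upperDensity d {i | i + j ∈ S}
    _ = limsup (boxFrequency {i | i + j ∈ S}) atTop := rfl
    _ ≤ limsup (boxFrequency S + boundary) atTop :=
      limsup_le_limsup (.of_forall freq_le)
        (isBoundedUnder_ge_boxFrequency _).isCoboundedUnder_le
        (isBoundedUnder_le_add (isBoundedUnder_le_boxFrequency S) lim.isBoundedUnder_le)
    _ ≤ limsup (boxFrequency S) atTop + limsup boundary atTop :=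
      limsup_add_le (isBoundedUnder_ge_boxFrequency S) (isBoundedUnder_le_boxFrequency S)
        lim.isBoundedUnder_ge.isCoboundedUnder_le lim.isBoundedUnder_le
    _ = upperDensity d S := by
      rw [lim.limsup_eq, add_zero]
      rfl

lemma upperDensity_preimage_add (j : Fin d → ℤ) (S : Set (Fin d → ℤ)) :
    upperDensity d {i | i + j ∈ S} = upperDensity d S := by
  refine le_antisymm (upperDensity_preimage_add_le j S) ?_
  simpa using upperDensity_preimage_add_le (-j) {i | i + j ∈ S}

end UpperDensity

section MeanSensitivity

variable {d : ℕ} {T : (Fin d → ℤ) → X → X} {f : X → ℂ}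

lemma rhoF_map_map (hTadd : ∀ i j, T (i + j) = T i ∘ T j) (j : Fin d → ℤ) (x y : X) :
    rhoF T f (T j x) (T j y) = rhoF T f x y := by
  have density_eq (ε : ℝ) : upperDensity d {i | ε < ‖f (T i (T j x)) - f (T i (T j y))‖} =
      upperDensity d {i | ε < ‖f (T i x) - f (T i y)‖} := by
    simpa only [Set.mem_ofPred_eq, hTadd, Function.comp_apply] using
      upperDensity_preimage_add j {i | ε < ‖f (T i x) - f (T i y)‖}
  simp only [rhoF, density_eq]

/-- `f`-mean sensitivity of the action `T`, the second alternative of the dichotomy. -/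
def MeanSensitive [TopologicalSpace X] (T : (Fin d → ℤ) → X → X) (f : X → ℂ) : Prop :=
  ∃ ε : ℝ, 0 < ε ∧ ∀ U : Set X, IsOpen U → U.Nonempty → ∃ x ∈ U, ∃ y ∈ U, ε < rhoF T f x y

/-- `x` is an `f`-mean equicontinuity point of the action `T`; in the first alternative of the
dichotomy every transitive point is one. The condition on `y` is phrased with neighbourhoods
instead of a metric, so that it makes sense in every topological space. -/
def MeanEquicontinuousAt [TopologicalSpace X] (T : (Fin d → ℤ) → X → X) (f : X → ℂ) (x : X) :
    Prop :=
  ∀ ε : ℝ, 0 < ε → ∀ᶠ y in 𝓝 x, rhoF T f x y ≤ ε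

lemma meanEquicontinuousAt_iff_dist [PseudoMetricSpace X] {x : X} :
    MeanEquicontinuousAt T f x ↔
      ∀ ε : ℝ, 0 < ε → ∃ δ : ℝ, 0 < δ ∧ ∀ y : X, dist x y ≤ δ → rhoF T f x y ≤ ε := by
  simp only [MeanEquicontinuousAt, Metric.nhds_basis_closedBall.eventually_iff,
    Metric.mem_closedBall']

lemma not_meanSensitive_iff [TopologicalSpace X] :
    ¬ MeanSensitive T f ↔
      ∀ ε : ℝ, 0 < ε → ∃ U : Set X, IsOpen U ∧ U.Nonempty ∧ ∀ x ∈ U, ∀ y ∈ U, rhoF T f x y ≤ ε := by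
  simp only [MeanSensitive, not_exists, not_and, not_forall, not_lt, exists_prop]

lemma meanEquicontinuousAt_of_dense_orbit [TopologicalSpace X] (hTc : ∀ j, Continuous (T j))
    (hTadd : ∀ i j, T (i + j) = T i ∘ T j) (hsens : ¬ MeanSensitive T f) {x : X}
    (hx : Dense (Set.range fun j => T j x)) : MeanEquicontinuousAt T f x := by
  intro ε hε
  obtain ⟨U, hU, hne, hsmall⟩ := not_meanSensitive_iff.1 hsens ε hε
  obtain ⟨_, hjU, j, rfl⟩ := hx.inter_open_nonempty U hU hne
  have preimage_mem : T j ⁻¹' U ∈ 𝓝 x := (hTc j).continuousAt (hU.mem_nhds hjU)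
  filter_upwards [preimage_mem] with y hy
  rw [← rhoF_map_map hTadd j]
  exact hsmall _ hjU _ hy

end MeanSensitivity

theorem stmt10_general {d : ℕ} [TopologicalSpace X] (T : (Fin d → ℤ) → X → X)
    (hTc : ∀ j, Continuous (T j)) (hTadd : ∀ i j, T (i + j) = T i ∘ T j) (f : X → ℂ) :
    (∀ x, Dense (Set.range fun j => T j x) → MeanEquicontinuousAt T f x) ∨ MeanSensitive T f :=
  or_iff_not_imp_right.2 fun hsens _ => meanEquicontinuousAt_of_dense_orbit hTc hTadd hsens

/-- a transitive TDS is either `f`-almost mean equicontinuous or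
`f`-mean sensitive. -/
theorem stmt10 {d : ℕ}
    [MetricSpace X] [CompactSpace X]
    (T : (Fin d → ℤ) → X → X)
    (hTc : ∀ j, Continuous (T j))
    (hTadd : ∀ i j, T (i + j) = T i ∘ T j)
    (htrans : {x : X | Dense (Set.range fun j : Fin d → ℤ => T j x)} ∈ residual X)
    (f : X → ℂ) (hf : Continuous f) :
    ({x : X | ∀ ε : ℝ, 0 < ε → ∃ δ : ℝ, 0 < δ ∧
        ∀ y : X, dist x y ≤ δ → rhoF T f x y ≤ ε} ∈ residual X) ∨
    (∃ ε : ℝ, 0 < ε ∧ ∀ U : Set X, IsOpen U → U.Nonempty →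
        ∃ x ∈ U, ∃ y ∈ U, ε < rhoF T f x y) := by
  exact (stmt10_general T hTc hTadd f).imp_left fun h =>
    mem_of_superset htrans fun x hx => meanEquicontinuousAt_iff_dist.1 (h x hx)
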